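/- Consider the system with n = 2, m = 1, p = 2 given by A = [[0,0],[1,0]], B = (1;0), C = I_2, D = 0, with d = (0,0,1) (so d_2 = d_1 = 0, d_0 = 1, satisfying d_0 ≠ 0, ‖d‖_2 = 1 and A² = 0) and corresponding M = [[0,1,0],[1,0,0]]. Let N ≥ 3 and let the input be u_0 = 1 and u_k = 0 for 1 ≤ k ≤ N−1. Then: (i) for every initial state x_0 ∈ ℝ², the output sequence {y_k}_{k=0}^{N−1} generated from x_0 under u is persistently exciting of order 1 (i.e., Σ_{k=0}^{N−1} y_k y_k^T is positive definite); but (ii) the sequence {M u_{[k−2,k]}}_{k=2}^{N−1} is not persistently exciting of order 1 (i.e., Σ_{k=2}^{N−1} (M u_{[k−2,k]})(M u_{[k−2,k]})^T is singular). This disproves the claim that persistent excitation of order 1 of {M u_{[k−n,k]}}_{k=n}^{N−1} is necessary for the output to be persistently exciting of order 1 for all initial conditions. -/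

import Mathlib

open Matrix Finset

noncomputable def stateSeq {n m : ℕ} (A : Matrix (Fin n) (Fin n) ℝ) (B : Matrix (Fin n) (Fin m) ℝ)
    (x0 : Fin n → ℝ) (u : ℕ → Fin m → ℝ) : ℕ → Fin n → ℝ
  | 0 => x0
  | k + 1 => A.mulVec (stateSeq A B x0 u k) + B.mulVec (u k)

/-- Output sequence `y_k = C x_k + D u_k` of the LTI system started at `x0` with input `u`. -/
noncomputable def outputSeq {n m p : ℕ} (A : Matrix (Fin n) (Fin n) ℝ) (B : Matrix (Fin n) (Fin m) ℝ)
    (C : Matrix (Fin p) (Fin n) ℝ) (D : Matrix (Fin p) (Fin m) ℝ)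
    (x0 : Fin n → ℝ) (u : ℕ → Fin m → ℝ) (k : ℕ) : Fin p → ℝ :=
  C.mulVec (stateSeq A B x0 u k) + D.mulVec (u k)

/-- Markov parameters: `Γ_0 = D`, `Γ_j = C A^(j-1) B` for `j ≥ 1`. -/
noncomputable def Markov {n m p : ℕ} (A : Matrix (Fin n) (Fin n) ℝ) (B : Matrix (Fin n) (Fin m) ℝ)
    (C : Matrix (Fin p) (Fin n) ℝ) (D : Matrix (Fin p) (Fin m) ℝ) : ℕ → Matrix (Fin p) (Fin m) ℝ
  | 0 => D
  | j + 1 => C * A ^ j * B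

/-- The matrix `M = [M_n ⋯ M_1 M_0]` with `M_j = ∑_{q=0}^j d_{j-q} Γ_q`; the block at
block-column `i` (from the left, `i = 0,…,n`) is `M_{n-i}`. -/
noncomputable def Mmat {n m p : ℕ} (A : Matrix (Fin n) (Fin n) ℝ) (B : Matrix (Fin n) (Fin m) ℝ)
    (C : Matrix (Fin p) (Fin n) ℝ) (D : Matrix (Fin p) (Fin m) ℝ) (d : ℕ → ℝ) :
    Matrix (Fin p) (Fin (n + 1) × Fin m) ℝ :=
  Matrix.of fun i jl =>
    (∑ q ∈ Finset.range ((n - (jl.1 : ℕ)) + 1),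
      d ((n - (jl.1 : ℕ)) - q) • Markov A B C D q) i jl.2

/-- The impulse input `u_0 = 1`, `u_k = 0` for `k ≥ 1` of the counterexample. -/
noncomputable def exU : ℕ → Fin 1 → ℝ := fun k _ => if k = 0 then 1 else 0

/-!
The input is an impulse, so every window `u_{[k-2,k]}` with `k ≥ 2` is a multiple of the first basis
vector and every `M u_{[k-2,k]}` is a multiple of the first column of `M`: one direction cannot
excite `ℝ²`. The output, on the other hand, also sees the impulse response at times `1` and `2`.
The initial state affects only the second coordinate of `y_1` and, as `A² = 0`, does not affect
`y_2` at all, giving `y_1 = (1, *)` and `y_2 = (0, 1)`, which span `ℝ²` for every initial state.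
-/

section PersistentExcitation

variable {ι n : Type*}

/-- Persistent excitation of order 1 of the family `w` over the finite index set `s`: its Gramian
`∑ k ∈ s, w k (w k)ᵀ` is positive definite. -/
def IsPersistentlyExciting (s : Finset ι) (w : ι → n → ℝ) : Prop :=
  (∑ k ∈ s, vecMulVec (w k) (w k)).PosDef

theorem dotProduct_sum_vecMulVec_self_mulVec [Fintype n]
    (s : Finset ι) (w : ι → n → ℝ) (v : n → ℝ) :
    v ⬝ᵥ ((∑ k ∈ s, vecMulVec (w k) (w k)) *ᵥ v) = ∑ k ∈ s, (v ⬝ᵥ w k) ^ 2 := by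
  rw [sum_mulVec, dotProduct_sum]
  refine sum_congr rfl fun k _ => ?_
  rw [vecMulVec_mulVec, op_smul_eq_smul, dotProduct_smul, dotProduct_comm (w k) v, smul_eq_mul, sq]

theorem isPersistentlyExciting_iff_eq_zero_of_dotProduct_eq_zero [Fintype n]
    {s : Finset ι} {w : ι → n → ℝ} :
    IsPersistentlyExciting s w ↔ ∀ v : n → ℝ, (∀ k ∈ s, v ⬝ᵥ w k = 0) → v = 0 := by
  have isHermitian : (∑ k ∈ s, vecMulVec (w k) (w k)).IsHermitian := by
    simp only [IsHermitian, conjTranspose_sum, conjTranspose_vecMulVec, star_trivial]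
  have quadraticForm_pos_iff (v : n → ℝ) :
      0 < v ⬝ᵥ ((∑ k ∈ s, vecMulVec (w k) (w k)) *ᵥ v) ↔ ¬ ∀ k ∈ s, v ⬝ᵥ w k = 0 := by
    rw [dotProduct_sum_vecMulVec_self_mulVec,
      (sum_nonneg fun k _ => sq_nonneg (v ⬝ᵥ w k)).lt_iff_ne', ne_eq,
      sum_eq_zero_iff_of_nonneg fun k _ => sq_nonneg (v ⬝ᵥ w k)]
    simp only [sq_eq_zero_iff]
  simp only [IsPersistentlyExciting, posDef_iff_dotProduct_mulVec, isHermitian, true_and,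
    star_trivial, quadraticForm_pos_iff]
  exact forall_congr' fun v => not_imp_not

theorem not_isPersistentlyExciting_smul [Finite n] [Nontrivial n]
    (s : Finset ι) (c : ι → ℝ) (w : n → ℝ) :
    ¬ IsPersistentlyExciting s fun k => c k • w := by
  have := Fintype.ofFinite n
  obtain ⟨v, v_ne_zero, v_dotProduct_w⟩ := exists_ne_zero_dotProduct_eq_zero w
  rw [isPersistentlyExciting_iff_eq_zero_of_dotProduct_eq_zero]
  intro h
  refine v_ne_zero (h v fun k _ => ?_)
  rw [dotProduct_smul, v_dotProduct_w, smul_zero]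

end PersistentExcitation

section ImpulseInput

theorem exU_zero : exU 0 = 1 := rfl

theorem exU_succ (k : ℕ) : exU (k + 1) = 0 := rfl

variable {n p : ℕ}

theorem stateSeq_exU_succ (A : Matrix (Fin n) (Fin n) ℝ) (B : Matrix (Fin n) (Fin 1) ℝ)
    (x0 : Fin n → ℝ) (k : ℕ) :
    stateSeq A B x0 exU (k + 1) = A ^ (k + 1) *ᵥ x0 + (A ^ k * B) *ᵥ 1 := by
  induction k with
  | zero => simp only [stateSeq, exU_zero, zero_add, pow_one, pow_zero, Matrix.one_mul]
  | succ k ih =>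
    rw [stateSeq, ih, exU_succ, mulVec_zero, add_zero, mulVec_add, mulVec_mulVec, mulVec_mulVec,
      ← Matrix.mul_assoc, ← pow_succ', ← pow_succ']

theorem outputSeq_exU_succ (A : Matrix (Fin n) (Fin n) ℝ) (B : Matrix (Fin n) (Fin 1) ℝ)
    (C : Matrix (Fin p) (Fin n) ℝ) (D : Matrix (Fin p) (Fin 1) ℝ) (x0 : Fin n → ℝ) (k : ℕ) :
    outputSeq A B C D x0 exU (k + 1) =
      (C * A ^ (k + 1)) *ᵥ x0 + Markov A B C D (k + 1) *ᵥ 1 := by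
  rw [outputSeq, stateSeq_exU_succ, exU_succ, mulVec_zero, add_zero, mulVec_add, mulVec_mulVec,
    mulVec_mulVec, ← Matrix.mul_assoc, Markov]

theorem mulVec_exU_window (M : Matrix (Fin p) (Fin (n + 1)) ℝ) (k : ℕ) :
    (M *ᵥ fun i : Fin (n + 1) => exU (k + i) 0) = exU k 0 • M.col 0 := by
  have window_eq_single : (fun i : Fin (n + 1) => exU (k + i) 0) = Pi.single 0 (exU k 0) := by
    funext i
    cases i using Fin.cases with
    | zero => simp only [Fin.val_zero, add_zero, Pi.single_eq_same]
    | succ i => simp only [Fin.val_succ, ← add_assoc, exU_succ, Pi.zero_apply,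
        Pi.single_eq_of_ne (Fin.succ_ne_zero i)]
  rw [window_eq_single, mulVec_single, op_smul_eq_smul]

end ImpulseInput

section Counterexample

/-- The output of the system of the counterexample, started at `x0` and driven by the impulse `exU`.
The system is a chain of two unit delays, `x_{k+1} = (u_k, x_k 0)`, with output the whole state. -/
noncomputable def delayChainOutput (x0 : Fin 2 → ℝ) : ℕ → Fin 2 → ℝ :=
  outputSeq !![(0 : ℝ), 0; 1, 0] !![(1 : ℝ); 0] (1 : Matrix (Fin 2) (Fin 2) ℝ)
    (0 : Matrix (Fin 2) (Fin 1) ℝ) x0 exU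

theorem delayChainOutput_one (x0 : Fin 2 → ℝ) : delayChainOutput x0 1 = ![1, x0 0] := by
  rw [delayChainOutput, outputSeq_exU_succ, Markov]
  ext i
  fin_cases i <;> simp [dotProduct]

theorem delayChainOutput_two (x0 : Fin 2 → ℝ) : delayChainOutput x0 2 = ![0, 1] := by
  have sq_eq_zero : !![(0 : ℝ), 0; 1, 0] ^ 2 = 0 := by
    ext i j
    fin_cases i <;> fin_cases j <;> simp [sq]
  rw [delayChainOutput, outputSeq_exU_succ, Markov, sq_eq_zero]
  ext i
  fin_cases i <;> simp [dotProduct]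

theorem isPersistentlyExciting_delayChainOutput {s : Finset ℕ} (h1 : 1 ∈ s) (h2 : 2 ∈ s)
    (x0 : Fin 2 → ℝ) :
    IsPersistentlyExciting s (delayChainOutput x0) := by
  rw [isPersistentlyExciting_iff_eq_zero_of_dotProduct_eq_zero]
  intro v hv
  have orthogonal_one : v 0 + v 1 * x0 0 = 0 := by
    simpa [delayChainOutput_one, dotProduct, Fin.sum_univ_two] using hv 1 h1
  have v_one : v 1 = 0 := by
    simpa [delayChainOutput_two, dotProduct, Fin.sum_univ_two] using hv 2 h2
  have v_zero : v 0 = 0 := by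
    simpa only [v_one, zero_mul, add_zero] using orthogonal_one
  ext i
  fin_cases i
  exacts [v_zero, v_one]

end Counterexample

/-- counterexample to necessity: for the system `A = [[0,0],[1,0]]`,
`B = (1;0)`, `C = I₂`, `D = 0` with `M = [[0,1,0],[1,0,0]]` and impulse input:
(i) for every `x0` the output is PE of order 1, but (ii) `{M u_{[k-2,k]}}_{k=2}^{N-1}` is not PE
of order 1. -/
theorem stmt_19 (N : ℕ) (hN : 3 ≤ N) :
    (∀ x0 : Fin 2 → ℝ,
      (∑ k ∈ Finset.range N,
        vecMulVec
          (outputSeq !![(0 : ℝ), 0; 1, 0] !![(1 : ℝ); 0] (1 : Matrix (Fin 2) (Fin 2) ℝ)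
            (0 : Matrix (Fin 2) (Fin 1) ℝ) x0 exU k)
          (outputSeq !![(0 : ℝ), 0; 1, 0] !![(1 : ℝ); 0] (1 : Matrix (Fin 2) (Fin 2) ℝ)
            (0 : Matrix (Fin 2) (Fin 1) ℝ) x0 exU k)).PosDef) ∧
    ¬ (∑ k ∈ Finset.range (N - 2),
        vecMulVec
          ((!![(0 : ℝ), 1, 0; 1, 0, 0]).mulVec fun i : Fin 3 => exU (k + (i : ℕ)) 0)
          ((!![(0 : ℝ), 1, 0; 1, 0, 0]).mulVec fun i : Fin 3 => exU (k + (i : ℕ)) 0)).PosDef := by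
  have one_mem : 1 ∈ range N := mem_range.2 (by lia)
  have two_mem : 2 ∈ range N := mem_range.2 (by lia)
  refine ⟨isPersistentlyExciting_delayChainOutput one_mem two_mem, ?_⟩
  simp only [mulVec_exU_window]
  exact not_isPersistentlyExciting_smul _ (fun k => exU k 0) _
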